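/- Let μ = 2λ/(1+λ²) with λ > 0, let g, V, r₀ ∈ ℝ with V ≠ 0, and define ρ(s) = r₀·V / (−g·r₀ + exp(μ·s·V)·(g·r₀ + V)). Define φ : ℝ → ℝ by φ(z) = (exp(z) − 1)/z for z ≠ 0 and φ(0) = 1. Let t ∈ ℝ be such that the denominator of ρ(s) is nonzero for all s between 0 and t and such that μ·t·φ(μ·t·V)·g·r₀ + exp(μ·t·V) > 0. Then μ·( t·V + g·∫₀ᵗ ρ(s) ds ) = log( μ·t·φ(μ·t·V)·g·r₀ + exp(μ·t·V) ). -/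

import Mathlib

open intervalIntegral

/-!
Substituting `ρ = r₀ / E` turns the modulus equation `ρ' = -μ (g ρ + V) ρ` into the linear equation
`E' = μ (V E + g r₀)` with `E 0 = 1`. Dividing by `E` gives `(log E)' = μ (V + g ρ)`, whose integral
is the claim once `E` is written in terms of `φ`.
-/

/-- The function `φ(z) = (exp z - 1) / z` of exponential integrators, extended by its limit `1`
at the removable singularity `z = 0`. -/
noncomputable def expPhi (z : ℝ) : ℝ :=
  if z = 0 then 1 else (Real.exp z - 1) / z

/-- The factor `r₀ / ρ(s)` by which the squared modulus `ρ` of the dissipative flow shrinks between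
times `0` and `s`. It is written through `expPhi` so that it also makes sense at `V = 0`. -/
noncomputable def modulusDecay (g V r₀ μ s : ℝ) : ℝ :=
  μ * s * expPhi (μ * s * V) * g * r₀ + Real.exp (μ * s * V)

theorem mul_expPhi (z : ℝ) : z * expPhi z = Real.exp z - 1 := by
  by_cases hz : z = 0
  · simp [hz]
  · rw [expPhi, if_neg hz, mul_div_cancel₀ _ hz]

theorem hasDerivAt_mul_expPhi (a x : ℝ) :
    HasDerivAt (fun y ↦ y * expPhi (y * a)) (Real.exp (x * a)) x := by
  by_cases ha : a = 0
  · simpa [ha, expPhi] using hasDerivAt_id' x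
  have hclosed : (fun y ↦ y * expPhi (y * a)) = fun y ↦ (Real.exp (y * a) - 1) / a := by
    funext y
    rw [eq_div_iff ha, ← mul_expPhi]
    ring
  rw [hclosed]
  simpa [ha] using (((hasDerivAt_mul_const a).exp.sub_const 1).div_const a : HasDerivAt _ _ x)

theorem integral_div_eq_log_sub_log {f f' : ℝ → ℝ} {a b : ℝ}
    (hf : ∀ x ∈ Set.uIcc a b, HasDerivAt f (f' x) x) (hne : ∀ x ∈ Set.uIcc a b, f x ≠ 0)
    (hint : IntervalIntegrable (fun x ↦ f' x / f x) MeasureTheory.volume a b) :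
    ∫ x in a..b, f' x / f x = Real.log (f b) - Real.log (f a) :=
  integral_eq_sub_of_hasDerivAt (fun x hx ↦ (hf x hx).log (hne x hx)) hint

section ModulusDecay

variable (g V r₀ μ : ℝ)

theorem modulusDecay_zero : modulusDecay g V r₀ μ 0 = 1 := by
  simp [modulusDecay]

theorem mul_modulusDecay (s : ℝ) :
    V * modulusDecay g V r₀ μ s = -g * r₀ + Real.exp (μ * s * V) * (g * r₀ + V) := by
  rw [modulusDecay]
  linear_combination g * r₀ * mul_expPhi (μ * s * V)

theorem hasDerivAt_modulusDecay (s : ℝ) :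
    HasDerivAt (modulusDecay g V r₀ μ) (μ * (V * modulusDecay g V r₀ μ s + g * r₀)) s := by
  have hμs : HasDerivAt (fun x ↦ μ * x) μ s := hasDerivAt_const_mul μ
  have hphi : HasDerivAt (fun x ↦ μ * x * expPhi (μ * x * V)) (Real.exp (μ * s * V) * μ) s :=
    (hasDerivAt_mul_expPhi V (μ * s)).comp s hμs
  refine (((hphi.mul_const g).mul_const r₀).add (hμs.mul_const V).exp).congr_deriv ?_
  rw [mul_modulusDecay]
  ring

end ModulusDecay

theorem dissipative_log_form_general (g V r₀ μ t : ℝ)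
    (hne : ∀ s ∈ Set.uIcc 0 t, modulusDecay g V r₀ μ s ≠ 0) :
    μ * (t * V + g * ∫ s in (0:ℝ)..t, r₀ / modulusDecay g V r₀ μ s)
      = Real.log (modulusDecay g V r₀ μ t) := by
  have hcont : ContinuousOn (modulusDecay g V r₀ μ) (Set.uIcc 0 t) :=
    fun s _ ↦ (hasDerivAt_modulusDecay g V r₀ μ s).continuousAt.continuousWithinAt
  have hρ : IntervalIntegrable (fun s ↦ r₀ / modulusDecay g V r₀ μ s) MeasureTheory.volume 0 t :=
    (continuousOn_const.div hcont hne).intervalIntegrable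
  have hrate : ∀ s ∈ Set.uIcc 0 t,
      μ * (V * modulusDecay g V r₀ μ s + g * r₀) / modulusDecay g V r₀ μ s
        = μ * (V + g * (r₀ / modulusDecay g V r₀ μ s)) := by
    intro s hs
    have := hne s hs
    field_simp
  have hlogDeriv : IntervalIntegrable
      (fun s ↦ μ * (V * modulusDecay g V r₀ μ s + g * r₀) / modulusDecay g V r₀ μ s)
      MeasureTheory.volume 0 t :=
    (ContinuousOn.div (by fun_prop) hcont hne).intervalIntegrable
  calc μ * (t * V + g * ∫ s in (0:ℝ)..t, r₀ / modulusDecay g V r₀ μ s)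
      = ∫ s in (0:ℝ)..t, μ * (V + g * (r₀ / modulusDecay g V r₀ μ s)) := by
        rw [integral_const_mul, integral_add intervalIntegrable_const (hρ.const_mul g),
          integral_const, integral_const_mul, sub_zero, smul_eq_mul]
    _ = ∫ s in (0:ℝ)..t,
          μ * (V * modulusDecay g V r₀ μ s + g * r₀) / modulusDecay g V r₀ μ s :=
        (integral_congr hrate).symm
    _ = Real.log (modulusDecay g V r₀ μ t) := by
        rw [integral_div_eq_log_sub_log (fun s _ ↦ hasDerivAt_modulusDecay g V r₀ μ s) hne
            hlogDeriv, modulusDecay_zero, Real.log_one, sub_zero]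

theorem dissipative_log_form
    (lam g V r₀ : ℝ) (hlam : 0 < lam) (hV : V ≠ 0)
    (μ : ℝ) (hμ : μ = 2 * lam / (1 + lam ^ 2))
    (ρ : ℝ → ℝ)
    (hρ : ∀ s : ℝ, ρ s = r₀ * V / (-g * r₀ + Real.exp (μ * s * V) * (g * r₀ + V)))
    (φ : ℝ → ℝ)
    (hφ : ∀ z : ℝ, φ z = if z = 0 then 1 else (Real.exp z - 1) / z)
    (t : ℝ)
    (hden : ∀ s ∈ Set.uIcc (0:ℝ) t, -g * r₀ + Real.exp (μ * s * V) * (g * r₀ + V) ≠ 0)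
    (hpos : 0 < μ * t * φ (μ * t * V) * g * r₀ + Real.exp (μ * t * V)) :
    μ * (t * V + g * ∫ s in (0:ℝ)..t, ρ s)
      = Real.log (μ * t * φ (μ * t * V) * g * r₀ + Real.exp (μ * t * V)) := by
  obtain rfl : φ = expPhi := funext hφ
  simp only [← mul_modulusDecay, mul_comm r₀ V, mul_div_mul_left _ _ hV] at hρ hden
  simp only [hρ]
  exact dissipative_log_form_general g V r₀ μ t fun s hs ↦ right_ne_zero_of_mul (hden s hs)
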